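/- Let f be a continuous function on the unit circle bΔ such that for every nonnegative integer n and every polynomial P with z^n f(z) + P(z) nonvanishing on bΔ, the winding number of z ↦ z^n f(z) + P(z) around 0 is nonnegative. Then ∫_{bΔ} z^n f(z) dz = 0 for every nonnegative integer n, and consequently f extends holomorphically through the open unit disc. -/

import Mathlib

open Polynomial Metric
open scoped Classical

/-- `g` (restricted to the unit circle) has winding number `n` around `0`:
there is a continuous argument lift `α` along `θ ↦ g (exp (iθ))` whose total
increase over `[0, 2π]` is `2πn`. -/
def HasWindingNumber (g : ℂ → ℂ) (n : ℤ) : Prop :=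
  ∃ α : ℝ → ℝ, Continuous α ∧
    (∀ θ : ℝ, g (Complex.exp (θ * Complex.I)) =
      (‖g (Complex.exp (θ * Complex.I))‖ : ℂ) * Complex.exp (α θ * Complex.I)) ∧
    α (2 * Real.pi) - α 0 = n * (2 * Real.pi)

/-- `f` on the unit circle extends continuously to the closed unit disc,
holomorphically on the open unit disc. -/
def ExtendsHolo (f : ℂ → ℂ) : Prop :=
  ∃ F : ℂ → ℂ, ContinuousOn F (closedBall 0 1) ∧
    DifferentiableOn ℂ F (ball 0 1) ∧ ∀ z ∈ sphere (0:ℂ) 1, F z = f z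

/-- Multiplicity of a zero of a (holomorphic) function: least `n` with
nonvanishing `n`-th derivative. -/
noncomputable def holoOrder (f : ℂ → ℂ) (z : ℂ) : ℕ :=
  sInf {n | iteratedDeriv n f z ≠ 0}

open Real in
/-- Trigonometric polynomials, written as `A + conj B` with `A`, `B` polynomials, are uniformly
dense in the continuous functions on the unit circle. -/
theorem exists_polynomial_add_conj_near {f : ℂ → ℂ} (hf : ContinuousOn f (sphere (0 : ℂ) 1))
    {ε : ℝ} (hε : 0 < ε) :
    ∃ A B : ℂ[X], ∀ z ∈ sphere (0 : ℂ) 1,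
      ‖f z - (A.eval z + (starRingEnd ℂ) (B.eval z))‖ < ε := by
  have : Fact (0 < 2 * π) := ⟨two_pi_pos⟩
  let g : C(AddCircle (2 * π), ℂ) :=
    ⟨fun x ↦ f (AddCircle.toCircle x), hf.comp_continuous
      (continuous_subtype_val.comp AddCircle.continuous_toCircle) fun x ↦
        mem_sphere_zero_iff_norm.2 (Circle.norm_coe _)⟩
  have hg : g ∈ closure (Submodule.span ℂ (Set.range (@fourier (2 * π))) : Set _) := by
    have := span_fourier_closure_eq_top (T := 2 * π)
    rw [← Submodule.topologicalClosure_coe, this]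
    trivial
  obtain ⟨p, hp, hgp⟩ := Metric.mem_closure_iff.1 hg ε hε
  have key : ∃ A B : ℂ[X], ∀ x : AddCircle (2 * π),
      p x = A.eval (AddCircle.toCircle x : ℂ)
        + (starRingEnd ℂ) (B.eval (AddCircle.toCircle x : ℂ)) := by
    clear hgp
    induction hp using Submodule.span_induction with
    | mem q hq =>
      obtain ⟨n, rfl⟩ := hq
      obtain ⟨k, rfl | rfl⟩ := n.eq_nat_or_neg
      · exact ⟨X ^ k, 0, fun x ↦ by simp [fourier_apply, AddCircle.toCircle_nsmul]⟩
      · exact ⟨0, X ^ k, fun x ↦ by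
          rw [fourier_neg]; simp [fourier_apply, AddCircle.toCircle_nsmul]⟩
    | zero => exact ⟨0, 0, fun x ↦ by simp⟩
    | add p q _ _ hp hq =>
      obtain ⟨A, B, h⟩ := hp
      obtain ⟨A', B', h'⟩ := hq
      exact ⟨A + A', B + B', fun x ↦ by simp [h, h']; ring⟩
    | smul c p _ hp =>
      obtain ⟨A, B, h⟩ := hp
      exact ⟨C c * A, C ((starRingEnd ℂ) c) * B, fun x ↦ by simp [h, mul_add]⟩
  obtain ⟨A, B, hAB⟩ := key
  refine ⟨A, B, fun z hz ↦ ?_⟩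
  obtain ⟨x, hx⟩ := (AddCircle.homeomorphCircle two_pi_pos.ne').surjective
    ⟨z, by simpa [Submonoid.unitSphere] using hz⟩
  have hxz : (AddCircle.toCircle x : ℂ) = z := by
    rw [← AddCircle.homeomorphCircle_apply two_pi_pos.ne', hx]
  have h1 := (ContinuousMap.dist_apply_le_dist (f := g) (g := p) x).trans_lt hgp
  rwa [hAB, hxz, dist_eq_norm, show g x = f z from congrArg f hxz] at h1

theorem Polynomial.diffContOnCl_eval (A : ℂ[X]) (s : Set ℂ) :
    DiffContOnCl ℂ (fun z ↦ A.eval z) s :=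
  A.differentiable.diffContOnCl

theorem ContinuousOn.circleIntegrable_unit {E : Type*} [NormedAddCommGroup E] {f : ℂ → E}
    (hf : ContinuousOn f (sphere (0 : ℂ) 1)) : CircleIntegrable f 0 1 :=
  hf.circleIntegrable zero_le_one

theorem Real.circleAverage_conj {f : ℂ → ℂ} (hf : CircleIntegrable f 0 1) :
    circleAverage (fun z ↦ (starRingEnd ℂ) (f z)) 0 1 = (starRingEnd ℂ) (circleAverage f 0 1) :=
  (Complex.conjCLE : ℂ →L[ℝ] ℂ).circleAverage_comp_comm hf

theorem Real.norm_circleAverage_le_circleAverage_norm {E : Type*} [NormedAddCommGroup E]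
    [NormedSpace ℝ E] (f : ℂ → E) (c : ℂ) (R : ℝ) :
    ‖circleAverage f c R‖ ≤ circleAverage (fun z ↦ ‖f z‖) c R := by
  rw [circleAverage, circleAverage, norm_smul, smul_eq_mul, Real.norm_of_nonneg (by positivity)]
  gcongr
  exact intervalIntegral.norm_integral_le_integral_norm two_pi_pos.le

theorem Real.norm_circleAverage_le_of_norm_le {f : ℂ → ℂ} {ε : ℝ}
    (hf : CircleIntegrable f 0 1) (h : ∀ z ∈ sphere (0 : ℂ) 1, ‖f z‖ ≤ ε) :
    ‖circleAverage f 0 1‖ ≤ ε :=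
  (norm_circleAverage_le_circleAverage_norm f 0 1).trans
    (circleAverage_mono_on_of_le_circle hf.norm (by simpa using h))

theorem Real.circleAverage_pow_succ_mul (f : ℂ → ℂ) (n : ℕ) :
    circleAverage (fun z ↦ z ^ (n + 1) * f z) 0 1
      = (2 * Real.pi * Complex.I)⁻¹ * ∮ z in C(0, 1), z ^ n * f z := by
  rw [circleAverage_eq_circleIntegral one_ne_zero, smul_eq_mul]
  congr 1
  refine circleIntegral.integral_congr (E := ℂ) zero_le_one fun z hz ↦ ?_
  have hz0 : z ≠ 0 := ne_zero_of_mem_unit_sphere ⟨z, hz⟩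
  simp only [sub_zero, smul_eq_mul, pow_succ]
  field_simp

/-- The average of `f z / (1 - a z)` against a positive power of `z` vanishes, as is seen formally
by expanding the geometric series, when the negative Fourier coefficients of `f` vanish. -/
theorem circleAverage_mul_div_one_sub_eq_zero {f : ℂ → ℂ}
    (hf : ContinuousOn f (sphere (0 : ℂ) 1))
    (h : ∀ n : ℕ, (∮ z in C(0, 1), z ^ n * f z) = 0) {a : ℂ} (ha : ‖a‖ < 1) :
    Real.circleAverage (fun z ↦ z * (f z / (1 - a * z))) 0 1 = 0 := by
  have hne : ∀ z ∈ sphere (0 : ℂ) 1, 1 - a * z ≠ 0 := by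
    intro z hz h0
    have h1 : ‖a * z‖ = 1 := by rw [← sub_eq_zero.1 h0, norm_one]
    rw [norm_mul, mem_sphere_zero_iff_norm.1 hz, mul_one] at h1
    exact ha.ne h1
  have hq : ContinuousOn (fun z ↦ f z / (1 - a * z)) (sphere (0 : ℂ) 1) :=
    hf.div (by fun_prop) hne
  obtain ⟨M, hM⟩ := (isCompact_sphere (0 : ℂ) 1).exists_bound_of_continuousOn hq
  set J : ℕ → ℂ := fun n ↦ Real.circleAverage (fun z ↦ z ^ (n + 1) * (f z / (1 - a * z))) 0 1
    with hJ
  have hcirc : ∀ n : ℕ, CircleIntegrable (fun z ↦ z ^ n * (f z / (1 - a * z))) 0 1 := fun n ↦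
    ((continuousOn_id.pow n).mul hq).circleIntegrable_unit
  have hcirc' : ∀ n : ℕ, CircleIntegrable (fun z ↦ a • (z ^ n * (f z / (1 - a * z)))) 0 1 :=
    fun n ↦ (hcirc n).const_fun_smul
  have hrec : ∀ n, J n = a * J (n + 1) := by
    intro n
    have h1 : J n - a • J (n + 1) = 0 := by
      rw [hJ]
      simp only
      rw [← Real.circleAverage_fun_smul, ← Real.circleAverage_fun_sub (hcirc _)
        (hcirc' _)]
      have h0 := Real.circleAverage_pow_succ_mul f n
      rw [h n, mul_zero] at h0
      refine Eq.trans (Real.circleAverage_congr_sphere fun z hz ↦ ?_) h0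
      have := hne z (by simpa using hz)
      simp only [smul_eq_mul]
      field_simp
      ring
    simpa [sub_eq_zero] using h1
  have hbound : ∀ n, ‖J n‖ ≤ M := fun n ↦
    Real.norm_circleAverage_le_of_norm_le (hcirc _) fun z hz ↦ by
      simpa [mem_sphere_zero_iff_norm.1 hz] using hM z hz
  have hpow : ∀ n, J 0 = a ^ n * J n := by
    intro n
    induction n with
    | zero => simp
    | succ n ih => rw [ih, hrec n]; ring
  have hlim : Filter.Tendsto (fun n : ℕ ↦ ‖a‖ ^ n * M) Filter.atTop (nhds 0) := by
    simpa using (tendsto_pow_atTop_nhds_zero_of_lt_one (norm_nonneg a) ha).mul_const M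
  have hJ0 : ‖J 0‖ ≤ 0 := ge_of_tendsto' hlim fun n ↦ by
    rw [hpow n, norm_mul, norm_pow]
    gcongr
    exact hbound n
  simpa [hJ] using hJ0

theorem continuousOn_poissonKernel_sphere {w : ℂ} (hw : w ∈ ball (0 : ℂ) 1) :
    ContinuousOn (poissonKernel 0 w) (sphere (0 : ℂ) 1) := by
  rw [poissonKernel_eq_re_herglotzRieszKernel]
  exact Complex.continuous_re.comp_continuousOn
    (by simpa using continuousOn_herglotzRieszKernel_sphere hw)

/-- If the negative Fourier coefficients of `f` vanish then its Poisson integral coincides with a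
Cauchy-type integral, hence is holomorphic. -/
theorem differentiableOn_circleAverage_poissonKernel {f : ℂ → ℂ}
    (hf : ContinuousOn f (sphere (0 : ℂ) 1))
    (h : ∀ n : ℕ, (∮ z in C(0, 1), z ^ n * f z) = 0) :
    DifferentiableOn ℂ (fun w ↦ Real.circleAverage (poissonKernel 0 w • f) 0 1) (ball 0 1) := by
  have hfi := hf.circleIntegrable_unit
  refine ((((differentiableOn_circleAverage_herglotzRieszKernel_smul hfi).add_const
    (Real.circleAverage f 0 1)).const_mul (2⁻¹ : ℂ))).congr fun w hw ↦ ?_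
  have hw1 : ‖(starRingEnd ℂ) w‖ < 1 := by simpa using hw
  have hne : ∀ z ∈ sphere (0 : ℂ) 1, 1 - (starRingEnd ℂ) w * z ≠ 0 := by
    intro z hz h0
    have h1 : ‖(starRingEnd ℂ) w * z‖ = 1 := by rw [← sub_eq_zero.1 h0, norm_one]
    rw [norm_mul, mem_sphere_zero_iff_norm.1 hz, mul_one] at h1
    exact hw1.ne h1
  have hHf : CircleIntegrable (fun z ↦ herglotzRieszKernel 0 w z • f z) 0 1 :=
    ContinuousOn.circleIntegrable_unit
      (ContinuousOn.smul (by simpa using continuousOn_herglotzRieszKernel_sphere hw) hf)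
  have hq : CircleIntegrable
      (fun z ↦ (starRingEnd ℂ) w • (z * (f z / (1 - (starRingEnd ℂ) w * z)))) 0 1 :=
    (continuousOn_id.mul (hf.div (by fun_prop) hne)).circleIntegrable_unit.const_fun_smul
  have hzero : Real.circleAverage
      (fun z ↦ (starRingEnd ℂ) w • (z * (f z / (1 - (starRingEnd ℂ) w * z)))) 0 1 = 0 := by
    rw [Real.circleAverage_fun_smul, circleAverage_mul_div_one_sub_eq_zero hf h hw1, smul_zero]
  have hsum := Real.circleAverage_fun_add
    ((hHf.fun_add hfi).const_fun_smul (a := (2⁻¹ : ℂ))) hq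
  rw [hzero, add_zero] at hsum
  rw [← smul_eq_mul, ← Real.circleAverage_fun_add hHf hfi, ← Real.circleAverage_fun_smul, ← hsum]
  refine Real.circleAverage_congr_sphere fun z hz ↦ ?_
  have hz : z ∈ sphere (0 : ℂ) 1 := by simpa using hz
  have hz1 : z * (starRingEnd ℂ) z = 1 := by
    rw [Complex.mul_conj, Complex.normSq_eq_norm_sq, mem_sphere_zero_iff_norm.1 hz]; simp
  have hz0 : z ≠ 0 := left_ne_zero_of_mul_eq_one hz1
  have hzw : z - w ≠ 0 := by
    rintro h0
    rw [sub_eq_zero.1 h0] at hz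
    simp only [mem_ball, mem_sphere] at hz hw
    exact hw.ne hz
  have hcz : (starRingEnd ℂ) z = z⁻¹ := eq_inv_of_mul_eq_one_right hz1
  have hn := hne z hz
  have hP : ((poissonKernel 0 w z : ℝ) : ℂ)
      = (1 - w * (starRingEnd ℂ) w) / ((z - w) * (z⁻¹ - (starRingEnd ℂ) w)) := by
    rw [poissonKernel_def, ← hcz, ← map_sub, Complex.mul_conj, Complex.mul_conj,
      Complex.normSq_eq_norm_sq, Complex.normSq_eq_norm_sq]
    simp [mem_sphere_zero_iff_norm.1 hz]
  have hn' : z⁻¹ - (starRingEnd ℂ) w ≠ 0 := by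
    intro h0
    apply hn
    rw [← sub_eq_zero.1 h0, inv_mul_cancel₀ hz0, sub_self]
  have hden : (z - w) * (z⁻¹ - (starRingEnd ℂ) w)
      = (z - w) * (1 - (starRingEnd ℂ) w * z) / z := by
    field_simp
  simp only [Pi.smul_apply', Complex.real_smul, hP, hden, herglotzRieszKernel_def, smul_eq_mul,
    sub_zero]
  field_simp
  ring

/-- The Poisson integral reproduces harmonic polynomials. -/
theorem circleAverage_poissonKernel_polynomial (A B : ℂ[X]) {w : ℂ} (hw : w ∈ ball (0 : ℂ) 1) :
    Real.circleAverage
      (poissonKernel 0 w • fun z ↦ A.eval z + (starRingEnd ℂ) (B.eval z)) 0 1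
      = A.eval w + (starRingEnd ℂ) (B.eval w) := by
  have hcirc : ∀ Q : ℂ[X], CircleIntegrable (poissonKernel 0 w • fun z ↦ Q.eval z) 0 1 := fun Q ↦
    ((continuousOn_poissonKernel_sphere hw).smul Q.continuous.continuousOn).circleIntegrable_unit
  have hconj : CircleIntegrable
      (fun z ↦ (starRingEnd ℂ) ((poissonKernel 0 w • fun z ↦ B.eval z) z)) 0 1 :=
    (Complex.continuous_conj.comp_continuousOn
      ((continuousOn_poissonKernel_sphere hw).smul
        B.continuous.continuousOn)).circleIntegrable_unit
  have hA := (A.diffContOnCl_eval (ball 0 1)).circleAverage_poissonKernel_smul hw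
  have hB := (B.diffContOnCl_eval (ball 0 1)).circleAverage_poissonKernel_smul hw
  rw [← hA, ← hB, ← Real.circleAverage_conj (hcirc B), ← Real.circleAverage_add (hcirc A) hconj]
  congr 1
  ext z
  simp

/-- The Poisson integral of a function bounded by `ε` on the circle is bounded by `ε`. -/
theorem norm_circleAverage_poissonKernel_le {g : ℂ → ℂ} {ε : ℝ}
    (hg : ContinuousOn g (sphere (0 : ℂ) 1)) (h : ∀ z ∈ sphere (0 : ℂ) 1, ‖g z‖ ≤ ε)
    {w : ℂ} (hw : w ∈ ball (0 : ℂ) 1) :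
    ‖Real.circleAverage (poissonKernel 0 w • g) 0 1‖ ≤ ε := by
  have hP := continuousOn_poissonKernel_sphere hw
  have hmass : Real.circleAverage (poissonKernel 0 w) 0 1 = 1 := by
    have h1 := (diffContOnCl_const (𝕜 := ℂ) (c := (1 : ℂ))).circleAverage_poissonKernel_smul hw
    have h2 := Complex.ofRealCLM.circleAverage_comp_comm hP.circleIntegrable_unit
    have h3 : (poissonKernel 0 w • fun _ ↦ (1 : ℂ)) = Complex.ofRealCLM ∘ poissonKernel 0 w := by
      ext z; simp
    rw [h3, h2] at h1
    exact Complex.ofReal_eq_one.1 h1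
  have hnonneg : ∀ z ∈ sphere (0 : ℂ) 1, 0 ≤ poissonKernel 0 w z := by
    intro z hz
    have : ‖w‖ < 1 := by simpa using hw
    rw [poissonKernel_def, sub_zero, sub_zero, mem_sphere_zero_iff_norm.1 hz]
    have := norm_nonneg w
    exact div_nonneg (by nlinarith) (by positivity)
  calc ‖Real.circleAverage (poissonKernel 0 w • g) 0 1‖
      ≤ Real.circleAverage (fun z ↦ ‖(poissonKernel 0 w • g) z‖) 0 1 :=
        Real.norm_circleAverage_le_circleAverage_norm _ _ _
    _ ≤ Real.circleAverage (fun z ↦ ε • poissonKernel 0 w z) 0 1 := by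
        refine Real.circleAverage_mono (hP.smul hg).norm.circleIntegrable_unit
          (hP.const_smul ε).circleIntegrable_unit fun z hz ↦ ?_
        have hz : z ∈ sphere (0 : ℂ) 1 := by simpa using hz
        rw [Pi.smul_apply', norm_smul, Real.norm_of_nonneg (hnonneg z hz), smul_eq_mul, mul_comm]
        exact mul_le_mul_of_nonneg_right (h z hz) (hnonneg z hz)
    _ = ε := by rw [Real.circleAverage_fun_smul, hmass, smul_eq_mul, mul_one]

theorem continuousOn_closedBall_poissonExtension {f : ℂ → ℂ}
    (hf : ContinuousOn f (sphere (0 : ℂ) 1)) :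
    ContinuousOn (fun w ↦ if w ∈ ball (0 : ℂ) 1 then
      Real.circleAverage (poissonKernel 0 w • f) 0 1 else f w) (closedBall 0 1) := by
  refine continuousOn_of_uniform_approx_of_continuousOn fun u hu ↦ ?_
  obtain ⟨ε, hε, hεu⟩ := Metric.mem_uniformity_dist.1 hu
  obtain ⟨A, B, hAB⟩ := exists_polynomial_add_conj_near hf (half_pos hε)
  have hcont : Continuous fun w ↦ A.eval w + (starRingEnd ℂ) (B.eval w) :=
    A.continuous.add (Complex.continuous_conj.comp B.continuous)
  refine ⟨_, hcont.continuousOn, fun w hw ↦ hεu ?_⟩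
  rw [dist_eq_norm]
  refine lt_of_le_of_lt ?_ (half_lt_self hε)
  split_ifs with hwb
  · have hP := continuousOn_poissonKernel_sphere hwb
    rw [← circleAverage_poissonKernel_polynomial A B hwb, ← Real.circleAverage_sub
      (hP.smul hf).circleIntegrable_unit (hP.smul hcont.continuousOn).circleIntegrable_unit,
      ← smul_sub]
    exact norm_circleAverage_poissonKernel_le (hf.sub hcont.continuousOn)
      (fun z hz ↦ (hAB z hz).le) hwb
  · refine (hAB w ?_).le
    simp only [mem_ball, mem_closedBall, mem_sphere, not_lt] at *
    exact le_antisymm hw hwb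

theorem extendsHolo_of_circleIntegral_eq_zero {f : ℂ → ℂ}
    (hf : ContinuousOn f (sphere (0 : ℂ) 1))
    (h : ∀ n : ℕ, (∮ z in C(0, 1), z ^ n * f z) = 0) : ExtendsHolo f := by
  refine ⟨_, continuousOn_closedBall_poissonExtension hf,
    (differentiableOn_circleAverage_poissonKernel hf h).congr fun w hw ↦ if_pos hw,
    fun z hz ↦ if_neg ?_⟩
  simp only [mem_ball, mem_sphere, not_lt] at *
  exact hz.ge

/-- If `g z = c / z * u z` on the circle where `u` takes values in the right half plane, then `g`
has winding number `-1`. -/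
theorem hasWindingNumber_neg_one {g u : ℂ → ℂ} {c : ℂ}
    (hu : ContinuousOn u (sphere (0 : ℂ) 1)) (hpos : ∀ z ∈ sphere (0 : ℂ) 1, 0 < (u z).re)
    (hg : ∀ z ∈ sphere (0 : ℂ) 1, g z = c * z⁻¹ * u z) : HasWindingNumber g (-1) := by
  have hmem : ∀ θ : ℝ, Complex.exp (θ * Complex.I) ∈ sphere (0 : ℂ) 1 := fun θ ↦ by
    simp [Complex.norm_exp_ofReal_mul_I]
  have hcont : Continuous fun θ : ℝ ↦ u (Complex.exp (θ * Complex.I)) :=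
    hu.comp_continuous (by fun_prop) hmem
  refine ⟨fun θ ↦ c.arg - θ + (u (Complex.exp (θ * Complex.I))).arg, ?_, fun θ ↦ ?_, ?_⟩
  · refine (continuous_const.sub continuous_id).add (continuous_iff_continuousAt.2 fun θ ↦ ?_)
    exact (Complex.continuousAt_arg (Or.inl (hpos _ (hmem θ)))).comp
      (f := fun θ : ℝ ↦ u (Complex.exp (θ * Complex.I))) hcont.continuousAt
  · rw [hg _ (hmem θ), norm_mul, norm_mul, norm_inv, Complex.norm_exp_ofReal_mul_I]
    nth_rewrite 1 [← Complex.norm_mul_exp_arg_mul_I c,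
      ← Complex.norm_mul_exp_arg_mul_I (u (Complex.exp (θ * Complex.I)))]
    push_cast
    rw [add_mul, sub_mul, Complex.exp_add, Complex.exp_sub]
    ring
  · have h1 : Complex.exp ((2 * Real.pi : ℝ) * Complex.I) = Complex.exp ((0 : ℝ) * Complex.I) := by
      push_cast
      rw [Complex.exp_two_pi_mul_I, zero_mul, Complex.exp_zero]
    simp only [h1]
    push_cast
    ring

/-- A continuous function on the circle with positive mean can be moved into the right half plane
by subtracting a polynomial that vanishes at the origin. -/
theorem exists_polynomial_re_sub_pos {v : ℂ → ℂ} (hv : ContinuousOn v (sphere (0 : ℂ) 1))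
    (hmean : 0 < (Real.circleAverage v 0 1).re) :
    ∃ Q : ℂ[X], ∀ z ∈ sphere (0 : ℂ) 1, 0 < (v z - z * Q.eval z).re := by
  set ε := (Real.circleAverage v 0 1).re / 2 with hε
  obtain ⟨A, B, hAB⟩ := exists_polynomial_add_conj_near hv (half_pos hmean)
  have hcont : Continuous fun w ↦ A.eval w + (starRingEnd ℂ) (B.eval w) :=
    A.continuous.add (Complex.continuous_conj.comp B.continuous)
  have hd := hv.sub hcont.continuousOn
  have hmeanAB := circleAverage_poissonKernel_polynomial A B
    (mem_ball_self one_pos : (0 : ℂ) ∈ ball 0 1)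
  have hmeanAB' : Real.circleAverage (fun z ↦ A.eval z + (starRingEnd ℂ) (B.eval z)) 0 1
      = A.eval 0 + (starRingEnd ℂ) (B.eval 0) := by
    rw [← hmeanAB]
    refine Real.circleAverage_congr_sphere fun z hz ↦ ?_
    have : ‖z‖ = 1 := by simpa using hz
    simp [poissonKernel_def, this]
  obtain ⟨z₀, hz₀, hmax⟩ := (isCompact_sphere (0 : ℂ) 1).exists_isMaxOn
    ⟨1, by simp⟩ hd.norm
  have hle : ‖Real.circleAverage v 0 1 - (A.eval 0 + (starRingEnd ℂ) (B.eval 0))‖ < ε := by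
    rw [← hmeanAB', ← Real.circleAverage_fun_sub hv.circleIntegrable_unit
      hcont.continuousOn.circleIntegrable_unit]
    exact (Real.norm_circleAverage_le_of_norm_le hd.circleIntegrable_unit
      fun z hz ↦ hmax hz).trans_lt (hAB z₀ hz₀)
  refine ⟨(A + B).divX, fun z hz ↦ ?_⟩
  have hdiv : z * (A + B).divX.eval z = A.eval z + B.eval z - (A.eval 0 + B.eval 0) := by
    have := congrArg (Polynomial.eval z) (X_mul_divX_add (A + B))
    rw [eval_add, eval_mul, eval_X, eval_C, coeff_zero_eq_eval_zero, eval_add, eval_add] at this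
    rw [← this]; ring
  have h1 := (Complex.abs_re_le_norm _).trans_lt (hAB z hz)
  have h2 := (Complex.abs_re_le_norm _).trans_lt hle
  rw [abs_lt] at h1 h2
  simp only [hdiv, Complex.sub_re, Complex.add_re, Complex.conj_re] at *
  linarith [h1.1, h2.2]

theorem stmt8 (f : ℂ → ℂ) (hf : ContinuousOn f (sphere (0:ℂ) 1))
    (h : ∀ n : ℕ, ∀ P : Polynomial ℂ,
      (∀ z ∈ sphere (0:ℂ) 1, z ^ n * f z + P.eval z ≠ 0) →
      ∀ m : ℤ, HasWindingNumber (fun z => z ^ n * f z + P.eval z) m → 0 ≤ m) :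
    (∀ n : ℕ, (∮ z in C(0, 1), z ^ n * f z) = 0) ∧ ExtendsHolo f := by
  suffices hzero : ∀ n : ℕ, (∮ z in C(0, 1), z ^ n * f z) = 0 from
    ⟨hzero, extendsHolo_of_circleIntegral_eq_zero hf hzero⟩
  intro n
  by_contra hn
  set a := Real.circleAverage (fun z ↦ z ^ (n + 1) * f z) 0 1 with ha
  have ha0 : a ≠ 0 := by
    rw [ha, Real.circleAverage_pow_succ_mul]
    exact mul_ne_zero (inv_ne_zero Complex.two_pi_I_ne_zero) hn
  set c := (starRingEnd ℂ) a with hc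
  have hc0 : c ≠ 0 := by simpa [hc] using ha0
  have hv : ContinuousOn (fun z ↦ c • (z ^ (n + 1) * f z)) (sphere (0 : ℂ) 1) :=
    ((continuousOn_id.pow (n + 1)).mul hf).const_smul c
  obtain ⟨Q, hQ⟩ := exists_polynomial_re_sub_pos hv (by
    rw [Real.circleAverage_fun_smul, ← ha, smul_eq_mul, mul_comm, hc, Complex.mul_conj,
      Complex.ofReal_re]
    exact Complex.normSq_pos.2 ha0)
  have heq : ∀ z ∈ sphere (0 : ℂ) 1, z ^ n * f z + (C (-c⁻¹) * Q).eval z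
      = c⁻¹ * z⁻¹ * (c • (z ^ (n + 1) * f z) - z * Q.eval z) := by
    intro z hz
    have hz0 : z ≠ 0 := ne_zero_of_mem_unit_sphere ⟨z, hz⟩
    simp only [eval_mul, eval_C, smul_eq_mul]
    field_simp
    ring
  have hwind := h n (C (-c⁻¹) * Q) (fun z hz ↦ by
      rw [heq z hz]
      refine mul_ne_zero (mul_ne_zero (inv_ne_zero hc0)
        (inv_ne_zero (ne_zero_of_mem_unit_sphere ⟨z, hz⟩))) fun h0 ↦ ?_
      have := hQ z hz
      rw [h0] at this
      exact lt_irrefl _ this) (-1)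
    (hasWindingNumber_neg_one (hv.sub (continuousOn_id.mul Q.continuous.continuousOn)) hQ heq)
  norm_num at hwind
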